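/- arXiv:1506.08912 — 2 statements merged into one kernel-verified Lean document; each statement's English description precedes it below -/
import Mathlib

section
/- For every real β ≥ 0, all integers m ≥ n+1 ≥ 1, every nonzero z ∈ ℂ, and every w ∈ ℂ: (β/z)·Z^{(β)}_{m,n}(z,w) + ∂_z Z^{(β)}_{m,n}(z,w) − w·Z^{(β)}_{m,n}(z,w) = (n+1)·Z^{(β)}_{m,n+1}(z,w). (Action of the raising operator a₂† = β/z + ∂_z − w on the 2D Laguerre polynomials.) -/
open Finset

/-- Pochhammer symbol `(a)_j = a (a+1) ⋯ (a+j-1)`. -/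
noncomputable def poch (a : ℝ) (j : ℕ) : ℝ := ∏ i ∈ Finset.range j, (a + i)

/-- The generalized 2D Laguerre polynomial `Z^{(β)}_{m,n}(z,w)` (for `m ≥ n`). -/
noncomputable def Zc (β : ℝ) (m n : ℕ) (z w : ℂ) : ℂ :=
  ∑ k ∈ Finset.range (n + 1),
    (((-1 : ℝ) ^ (n - k) * poch (β + 1) m /
        (k.factorial * (n - k).factorial * poch (β + 1) (m - k)) : ℝ) : ℂ) *
      z ^ (m - k) * w ^ (n - k)

/-!
The `k`-th term of `Z_{m,n+1}` has degree `n + 1 - k` in `w`. Multiplying `Z_{m,n}` by `-w` weights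
the terms of `Z_{m,n+1}` by this degree (that is, `-w Z_{m,n} = w ∂_w Z_{m,n+1}`), while
`β/z + ∂_z` shifts `k` to `k + 1` and weights them by the complementary factor `k`.
The two weights add up to `n + 1`.
-/

lemma poch_succ (a : ℝ) (j : ℕ) : poch a (j + 1) = poch a j * (a + j) :=
  prod_range_succ _ _

lemma poch_pos {a : ℝ} (ha : 0 < a) (j : ℕ) : 0 < poch a j :=
  prod_pos fun _ _ => by positivity

lemma poch_ne_zero_of_le {a : ℝ} {i j : ℕ} (hij : i ≤ j) (hj : poch a j ≠ 0) : poch a i ≠ 0 :=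
  ne_zero_of_dvd_ne_zero hj (prod_dvd_prod_of_subset _ _ _ (range_mono hij))

/-- The coefficient of `z ^ (m - k) * w ^ (n - k)` in the 2D Laguerre polynomial `Zc β m n`, meant
for `k ≤ n ≤ m`, where no subtraction truncates. -/
noncomputable def ZcCoeff (β : ℝ) (m n k : ℕ) : ℝ :=
  (-1) ^ (n - k) * poch (β + 1) m / (k.factorial * (n - k).factorial * poch (β + 1) (m - k))

lemma add_mul_ZcCoeff {β : ℝ} {m k : ℕ} (n : ℕ) (hβ : poch (β + 1) m ≠ 0) (hkm : k < m) :
    (β + (m - k : ℕ)) * ZcCoeff β m n k = (k + 1) * ZcCoeff β m (n + 1) (k + 1) := by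
  obtain ⟨d, rfl⟩ := Nat.exists_eq_add_of_lt hkm
  have hsub : k + d + 1 - k = d + 1 := by lia
  have hsub' : k + d + 1 - (k + 1) = d := by lia
  have hpoch : poch (β + 1) d * (β + 1 + d) ≠ 0 := by
    rw [← poch_succ]
    exact poch_ne_zero_of_le (by lia) hβ
  obtain ⟨hd, hβd⟩ := mul_ne_zero_iff.mp hpoch
  simp only [ZcCoeff, hsub, hsub', Nat.add_sub_add_right, Nat.factorial_succ, poch_succ _ d]
  push_cast
  field_simp
  ring

lemma sub_mul_ZcCoeff_succ (β : ℝ) (m : ℕ) {n k : ℕ} (hkn : k ≤ n) :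
    ((n : ℝ) + 1 - k) * ZcCoeff β m (n + 1) k = -ZcCoeff β m n k := by
  obtain ⟨d, rfl⟩ := Nat.exists_eq_add_of_le hkn
  have hsub : k + d + 1 - k = d + 1 := by lia
  have hweight : ((k + d : ℕ) : ℝ) + 1 - k = d + 1 := by push_cast; ring
  simp only [ZcCoeff, hsub, hweight, Nat.add_sub_cancel_left, Nat.factorial_succ, pow_succ]
  push_cast
  field_simp

/-- The `k`-th term in the sum defining the 2D Laguerre polynomial `Zc β m n z w`. -/
noncomputable def ZcTerm (β : ℝ) (m n k : ℕ) (z w : ℂ) : ℂ :=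
  ZcCoeff β m n k * z ^ (m - k) * w ^ (n - k)

lemma Zc_eq_sum_ZcTerm (β : ℝ) (m n : ℕ) (z w : ℂ) :
    Zc β m n z w = ∑ k ∈ range (n + 1), ZcTerm β m n k z w :=
  rfl

lemma hasDerivAt_ZcTerm (β : ℝ) (m n k : ℕ) (z w : ℂ) :
    HasDerivAt (fun z' => ZcTerm β m n k z' w)
      (ZcCoeff β m n k * ((m - k : ℕ) * z ^ (m - k - 1)) * w ^ (n - k)) z :=
  ((hasDerivAt_pow (m - k) z).const_mul _).mul_const _

lemma div_mul_ZcTerm_add_deriv {β : ℝ} {m k : ℕ} (n : ℕ) (hβ : poch (β + 1) m ≠ 0) (hkm : k < m)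
    {z : ℂ} (hz : z ≠ 0) (w : ℂ) :
    β / z * ZcTerm β m n k z w + deriv (fun z' => ZcTerm β m n k z' w) z =
      (k + 1) * ZcTerm β m (n + 1) (k + 1) z w := by
  have hcoeff : ((β : ℂ) + (m - k : ℕ)) * ZcCoeff β m n k =
      (k + 1) * ZcCoeff β m (n + 1) (k + 1) := by
    exact_mod_cast add_mul_ZcCoeff n hβ hkm
  have hpow : z ^ (m - k) = z ^ (m - (k + 1)) * z := by
    rw [← pow_succ]
    congr 1
    lia
  rw [(hasDerivAt_ZcTerm β m n k z w).deriv, ZcTerm, ZcTerm, hpow, Nat.sub_sub,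
    Nat.add_sub_add_right]
  calc _ = (β + (m - k : ℕ)) * ZcCoeff β m n k * z ^ (m - (k + 1)) * w ^ (n - k) := by
        field_simp
    _ = _ := by rw [hcoeff]; ring

lemma mul_ZcTerm (β : ℝ) (m : ℕ) {n k : ℕ} (hkn : k ≤ n) (z w : ℂ) :
    w * ZcTerm β m n k z w = -((n + 1 - k) * ZcTerm β m (n + 1) k z w) := by
  have hcoeff : ((n : ℂ) + 1 - k) * ZcCoeff β m (n + 1) k = -ZcCoeff β m n k := by
    exact_mod_cast sub_mul_ZcCoeff_succ β m hkn
  rw [ZcTerm, ZcTerm, Nat.sub_add_comm hkn, pow_succ]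
  linear_combination (z ^ (m - k) * w ^ (n - k) * w) * hcoeff

lemma div_mul_Zc_add_deriv {β : ℝ} {m n : ℕ} (hβ : poch (β + 1) m ≠ 0) (hnm : n < m)
    {z : ℂ} (hz : z ≠ 0) (w : ℂ) :
    β / z * Zc β m n z w + deriv (fun z' => Zc β m n z' w) z =
      ∑ k ∈ range (n + 2), k * ZcTerm β m (n + 1) k z w := by
  simp only [Zc_eq_sum_ZcTerm]
  rw [deriv_fun_sum fun k _ => (hasDerivAt_ZcTerm β m n k z w).differentiableAt, mul_sum,
    ← sum_add_distrib, sum_range_succ' _ (n + 1), Nat.cast_zero, zero_mul, add_zero]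
  refine sum_congr rfl fun k hk => ?_
  rw [div_mul_ZcTerm_add_deriv n hβ (by grind) hz, Nat.cast_succ]

lemma mul_Zc (β : ℝ) (m n : ℕ) (z w : ℂ) :
    w * Zc β m n z w = -∑ k ∈ range (n + 2), (n + 1 - k) * ZcTerm β m (n + 1) k z w := by
  rw [Zc_eq_sum_ZcTerm, mul_sum, sum_range_succ _ (n + 1), Nat.cast_succ, sub_self, zero_mul,
    add_zero, ← sum_neg_distrib]
  exact sum_congr rfl fun k hk => mul_ZcTerm β m (mem_range_succ_iff.mp hk) z w

theorem raising_a2_dagger_general {β : ℝ} {m n : ℕ} (hβ : poch (β + 1) m ≠ 0) (hnm : n < m)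
    {z : ℂ} (hz : z ≠ 0) (w : ℂ) :
    (β / z) * Zc β m n z w + deriv (fun z' => Zc β m n z' w) z - w * Zc β m n z w =
      (n + 1) * Zc β m (n + 1) z w := by
  rw [div_mul_Zc_add_deriv hβ hnm hz, mul_Zc, sub_neg_eq_add, ← sum_add_distrib,
    Zc_eq_sum_ZcTerm, mul_sum]
  exact sum_congr rfl fun k _ => by ring

/-- Action of the raising operator `a₂† = β/z + ∂_z − w` on the 2D Laguerre polynomials:
`(β/z)·Z^{(β)}_{m,n} + ∂_z Z^{(β)}_{m,n} − w·Z^{(β)}_{m,n} = (n+1)·Z^{(β)}_{m,n+1}`. -/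
theorem raising_a2_dagger (β : ℝ) (hβ : 0 ≤ β) (m n : ℕ) (hmn : n + 1 ≤ m) (z : ℂ)
    (hz : z ≠ 0) (w : ℂ) :
    ((β : ℂ) / z) * Zc β m n z w + deriv (fun z' => Zc β m n z' w) z - w * Zc β m n z w
      = ((n : ℂ) + 1) * Zc β m (n + 1) z w :=
  raising_a2_dagger_general (poch_pos (by positivity) m).ne' hmn hz w
end

section
/- For every real β ≥ 0, all integers m ≥ n+1 with n ≥ 1, and every quaternion q ∈ ℍ with conjugate q̄: (β+m) · q · Z^{(β)}_{m−1,n}(q,q̄) = (β+m−n) · Z^{(β)}_{m,n}(q,q̄) − q̄ · Z^{(β)}_{m,n−1}(q,q̄). -/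
open Finset Quaternion

/-- The quaternionic 2D Laguerre polynomial `Z^{(β)}_{m,n}(q,q̄)` (for `m ≥ n`). -/
noncomputable def Zq (β : ℝ) (m n : ℕ) (q : ℍ[ℝ]) : ℍ[ℝ] :=
  ∑ k ∈ Finset.range (n + 1),
    ((-1 : ℝ) ^ (n - k) * poch (β + 1) m /
        (k.factorial * (n - k).factorial * poch (β + 1) (m - k))) •
      (q ^ (m - k) * (star q) ^ (n - k))

/-!
On the term `x ^ (m - k) * y ^ (n - k)` of `Z^{(β)}_{m,n}`, the Euler operators `x ∂ₓ` and `y ∂_y`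
act by the scalars `m - k` and `n - k`. Comparing coefficients, `(β + m) x Z_{m-1,n}` is
`(β + x ∂ₓ) Z_{m,n}` and `Z_{m,n-1} y` is `-(y ∂_y) Z_{m,n}`, so the recurrence reduces to
`β + (m - k) = (β + m - n) + (n - k)`. Conjugation enters only through `q̄ q = q q̄`, which moves `q̄`
across `Z_{m,n-1}`.
-/

section Laguerre2D

variable {K A : Type*} [Field K] [Ring A] [Algebra K A]

/-- The coefficient of `x ^ (m - k) * y ^ (n - k)` in the 2D Laguerre polynomial `Z^{(β)}_{m,n}`,
with Pochhammer symbols expressed by `ascPochhammer`. It has the intended meaning for `k ≤ m`,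
`k ≤ n` and `(β + 1)_{m-k} ≠ 0`. -/
noncomputable def laguerre2DCoeff (β : K) (m n k : ℕ) : K :=
  (-1) ^ (n - k) * (ascPochhammer K m).eval (β + 1) /
    (k.factorial * (n - k).factorial * (ascPochhammer K (m - k)).eval (β + 1))

/-- The 2D Laguerre polynomial `Z^{(β)}_{m,n}(x, y)`, for `n ≤ m`, evaluated in an algebra. As `x`
and `y` need not commute, the powers of `x` are written on the left. -/
noncomputable def laguerre2D (β : K) (m n : ℕ) (x y : A) : A :=
  ∑ k ∈ range (n + 1), laguerre2DCoeff β m n k • (x ^ (m - k) * y ^ (n - k))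

theorem laguerre2DCoeff_succ_left (β : K) {m k : ℕ} (n : ℕ) (hk : k ≤ m)
    (hβ : β + 1 + (m - k : ℕ) ≠ 0) :
    (β + 1 + m) * laguerre2DCoeff β m n k =
      (β + 1 + (m - k : ℕ)) * laguerre2DCoeff β (m + 1) n k := by
  simp only [laguerre2DCoeff, Nat.sub_add_comm hk, ascPochhammer_succ_eval]
  field_simp

theorem laguerre2DCoeff_succ_right [CharZero K] (β : K) (m : ℕ) {n k : ℕ} (hk : k ≤ n) :
    laguerre2DCoeff β m n k = -((n + 1 - k : ℕ) * laguerre2DCoeff β m (n + 1) k) := by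
  have hnk : ((n - k : ℕ) : K) + 1 ≠ 0 := Nat.cast_add_one_ne_zero _
  simp only [laguerre2DCoeff, Nat.sub_add_comm hk, Nat.factorial_succ, pow_succ]
  push_cast
  field_simp

theorem smul_mul_laguerre2D {β : K} {m n : ℕ} (hnm : n ≤ m)
    (hβ : ∀ i ≤ m, β + 1 + (i : K) ≠ 0) (x y : A) :
    (β + 1 + m) • (x * laguerre2D β m n x y) =
      ∑ k ∈ range (n + 1), ((β + (m + 1 - k : ℕ)) * laguerre2DCoeff β (m + 1) n k) •
        (x ^ (m + 1 - k) * y ^ (n - k)) := by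
  simp only [laguerre2D, mul_sum, smul_sum]
  refine sum_congr rfl fun k hk => ?_
  have hkm : k ≤ m := (mem_range_succ_iff.mp hk).trans hnm
  rw [mul_smul_comm, smul_smul, laguerre2DCoeff_succ_left β n hkm (hβ _ (Nat.sub_le m k)),
    ← mul_assoc, ← pow_succ', Nat.sub_add_comm hkm, Nat.cast_succ, add_right_comm, add_assoc β]

theorem laguerre2D_mul_right [CharZero K] (β : K) (m n : ℕ) (x y : A) :
    laguerre2D β m n x y * y =
      -∑ k ∈ range (n + 2), ((n + 1 - k : ℕ) * laguerre2DCoeff β m (n + 1) k) •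
        (x ^ (m - k) * y ^ (n + 1 - k)) := by
  rw [sum_range_succ, Nat.sub_self, Nat.cast_zero, zero_mul, zero_smul, add_zero,
    laguerre2D, sum_mul, ← sum_neg_distrib]
  refine sum_congr rfl fun k hk => ?_
  have hkn : k ≤ n := mem_range_succ_iff.mp hk
  rw [laguerre2DCoeff_succ_right β m hkn, smul_mul_assoc, mul_assoc, ← pow_succ,
    ← Nat.sub_add_comm hkn, neg_smul]

theorem commute_laguerre2D {x y z : A} (hx : Commute z x) (hy : Commute z y) (β : K) (m n : ℕ) :
    Commute z (laguerre2D β m n x y) :=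
  Commute.sum_right _ _ _ fun _ _ => ((hx.pow_right _).mul_right (hy.pow_right _)).smul_right _

theorem quat_recurrence_mixed_general [CharZero K] {β : K} {m n : ℕ}
    (hβ : ∀ i < m, β + 1 + (i : K) ≠ 0) (hn : 1 ≤ n) (hmn : n + 1 ≤ m) (x y : A) :
    (β + m) • (x * laguerre2D β (m - 1) n x y) =
      (β + m - n) • laguerre2D β m n x y - laguerre2D β m (n - 1) x y * y := by
  obtain ⟨n, rfl⟩ := Nat.exists_eq_add_of_le' hn
  obtain ⟨m, rfl⟩ := Nat.exists_eq_add_of_le' (hn.trans (Nat.le_of_succ_le hmn))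
  have hnm : n + 1 ≤ m := Nat.le_of_succ_le_succ hmn
  have hβm : β + ((m + 1 : ℕ) : K) = β + 1 + m := by push_cast; ring
  simp only [Nat.add_sub_cancel]
  rw [hβm, smul_mul_laguerre2D hnm fun i hi => hβ i (Nat.lt_succ_of_le hi), ← hβm,
    laguerre2D_mul_right, sub_neg_eq_add, laguerre2D, smul_sum, ← sum_add_distrib]
  refine sum_congr rfl fun k hk => ?_
  have hkn : k ≤ n + 1 := mem_range_succ_iff.mp hk
  have eigenvalues : β + ((m + 1 - k : ℕ) : K) =
      β + (m + 1 : ℕ) - (n + 1 : ℕ) + (n + 1 - k : ℕ) := by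
    rw [Nat.cast_sub (by omega), Nat.cast_sub hkn]
    ring
  rw [eigenvalues, add_mul, add_smul, mul_smul]

end Laguerre2D

theorem poch_eq_eval_ascPochhammer (a : ℝ) (j : ℕ) : poch a j = (ascPochhammer ℝ j).eval a := by
  induction j with
  | zero => simp [poch]
  | succ j ih => rw [ascPochhammer_succ_eval, ← ih, poch, prod_range_succ, ← poch]

theorem Zq_eq_laguerre2D (β : ℝ) (m n : ℕ) (q : ℍ[ℝ]) :
    Zq β m n q = laguerre2D β m n q (star q) := by
  simp only [Zq, laguerre2D, laguerre2DCoeff, poch_eq_eval_ascPochhammer]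

/-- Recurrence `(β+m) q Z^{(β)}_{m−1,n}(q,q̄) = (β+m−n) Z^{(β)}_{m,n}(q,q̄) − q̄ Z^{(β)}_{m,n−1}(q,q̄)`. -/
theorem quat_recurrence_mixed (β : ℝ) (hβ : 0 ≤ β) (m n : ℕ) (hn : 1 ≤ n)
    (hmn : n + 1 ≤ m) (q : ℍ[ℝ]) :
    (β + m) • (q * Zq β (m - 1) n q)
      = (β + m - n) • Zq β m n q - star q * Zq β m (n - 1) q := by
  simp only [Zq_eq_laguerre2D,
    (commute_laguerre2D (star_comm_self' q) (Commute.refl (star q)) β m (n - 1)).eq]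
  exact quat_recurrence_mixed_general (fun i _ => by positivity) hn hmn q (star q)
end
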